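/- For every integer n ≥ 0, the number of Dyck paths of semi-length n in which no two peaks have the same height is odd. -/

import Mathlib

/-- The step associated to a letter: `true` is an up step `+1`, `false` a down step `-1`. -/
def stepVal (b : Bool) : ℤ := if b then 1 else -1

/-- Partial sum `S_i`: the sum of the first `i` steps of the word `w`. -/
def psum {L : ℕ} (w : Fin L → Bool) (i : ℕ) : ℤ :=
  ∑ j : Fin L, if (j : ℕ) < i then stepVal (w j) else 0

/-- A Dyck bridge: a `±1` word whose total sum is `0`. -/
def IsBridge {L : ℕ} (w : Fin L → Bool) : Prop := psum w L = 0

/-- A Dyck path: a bridge all of whose partial sums are nonnegative. -/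
def IsDyck {L : ℕ} (w : Fin L → Bool) : Prop :=
  IsBridge w ∧ ∀ i : ℕ, 0 ≤ psum w i

/-- A peak at (0-based) position `i`: step `i` is up and step `i+1` is down. -/
def IsPeak {L : ℕ} (w : Fin L → Bool) (i : ℕ) : Prop :=
  ∃ j k : Fin L, (j : ℕ) = i ∧ (k : ℕ) = i + 1 ∧ w j = true ∧ w k = false

/-- The height of the peak at (0-based) position `i`, i.e. the altitude
reached by its up step. -/
def peakHeight {L : ℕ} (w : Fin L → Bool) (i : ℕ) : ℤ := psum w (i + 1)

/-- A crossing of the x-axis at (1-based) index `i`: `0 < i < L`, `S_i = 0`,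
and the steps `w_i`, `w_{i+1}` (1-based) are equal. -/
def IsCrossing {L : ℕ} (w : Fin L → Bool) (i : ℕ) : Prop :=
  0 < i ∧ i < L ∧ psum w i = 0 ∧
    ∃ j k : Fin L, (j : ℕ) + 1 = i ∧ (k : ℕ) = i ∧ w j = w k

def rv {L : ℕ} (w : Fin L → Bool) : Fin L → Bool := fun j => !w (Fin.rev j)

theorem rv_rv {L : ℕ} (w : Fin L → Bool) : rv (rv w) = w := by
  funext j; simp [rv]

theorem psum_rv {L : ℕ} (w : Fin L → Bool) (i : ℕ) :
    psum (rv w) i = psum w (L - i) - psum w L := by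
  unfold psum
  rw [← Equiv.sum_comp Fin.revPerm, ← Finset.sum_sub_distrib]
  refine Finset.sum_congr rfl fun j _ => ?_
  have hj := j.isLt
  have h1 : ((Fin.rev j : Fin L) : ℕ) < i ↔ ¬ (j : ℕ) < L - i := by
    rw [Fin.val_rev]; omega
  simp only [Fin.revPerm_apply, h1, rv, Fin.rev_rev, hj, if_true]
  by_cases h : (j : ℕ) < L - i
  · simp [h]
  · cases hw : w j <;> simp [h, stepVal]

theorem psum_zero {L : ℕ} (w : Fin L → Bool) : psum w 0 = 0 := by
  simp [psum]

theorem isDyck_rv {L : ℕ} {w : Fin L → Bool} (h : IsDyck w) : IsDyck (rv w) := by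
  obtain ⟨h0, h1⟩ := h
  unfold IsBridge at h0
  refine ⟨?_, fun i => ?_⟩
  · unfold IsBridge
    rw [psum_rv, h0, Nat.sub_self, psum_zero]; rfl
  · rw [psum_rv, h0, sub_zero]; exact h1 _

theorem isPeak_rv {L : ℕ} {w : Fin L → Bool} {i : ℕ} (h : IsPeak (rv w) i) :
    i + 2 ≤ L ∧ IsPeak w (L - 2 - i) := by
  obtain ⟨j, k, hj, hk, hwj, hwk⟩ := h
  have := j.isLt
  have := k.isLt
  refine ⟨by omega, Fin.rev k, Fin.rev j, ?_, ?_, ?_, ?_⟩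
  · rw [Fin.val_rev]; omega
  · rw [Fin.val_rev]; omega
  · simpa [rv] using hwk
  · simpa [rv] using hwj

def Good {L : ℕ} (w : Fin L → Bool) : Prop :=
  IsDyck w ∧ ∀ i j : ℕ, IsPeak w i → IsPeak w j → i ≠ j →
        peakHeight w i ≠ peakHeight w j

theorem height_rv {L : ℕ} {w : Fin L → Bool} (h : IsDyck w) {i : ℕ} (hi : i + 2 ≤ L) :
    peakHeight (rv w) i = peakHeight w (L - 2 - i) := by
  have h0 := h.1
  unfold IsBridge at h0
  unfold peakHeight
  rw [psum_rv, h0, sub_zero]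
  congr 1; omega

theorem good_rv {L : ℕ} {w : Fin L → Bool} (h : Good w) : Good (rv w) := by
  refine ⟨isDyck_rv h.1, fun i j hi hj hij => ?_⟩
  obtain ⟨hi, hi'⟩ := isPeak_rv hi
  obtain ⟨hj, hj'⟩ := isPeak_rv hj
  rw [height_rv h.1 hi, height_rv h.1 hj]
  exact h.2 _ _ hi' hj' (by omega)

def mid (n : ℕ) : Fin (2 * n) → Bool := fun j => decide ((j : ℕ) < n)

theorem rv_mid (n : ℕ) : rv (mid n) = mid n := by
  funext j
  have := j.isLt
  simp only [rv, mid, Fin.val_rev, ← decide_not]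
  congr 1
  apply propext
  omega

theorem good_mid (n : ℕ) : Good (mid n) := by
  have key : psum (mid n) (2 * n) = 0 := by
    have := psum_rv (mid n) (2 * n)
    rw [rv_mid, Nat.sub_self, psum_zero] at this
    omega
  have low : ∀ i ≤ n, 0 ≤ psum (mid n) i := by
    intro i hi
    unfold psum
    refine Finset.sum_nonneg fun j _ => ?_
    split_ifs with h
    · have : (j : ℕ) < n := by omega
      simp [mid, stepVal, this]
    · exact le_rfl
  refine ⟨⟨key, fun i => ?_⟩, ?_⟩
  · rcases le_total i n with h | h
    · exact low i h
    · have := psum_rv (mid n) i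
      rw [rv_mid, key, sub_zero] at this
      rw [this]
      exact low _ (by omega)
  · rintro i j ⟨a, b, ha, hb, hwa, hwb⟩ ⟨c, d, hc, hd, hwc, hwd⟩ hij
    simp only [mid, decide_eq_true_eq, decide_eq_false_iff_not] at hwa hwb hwc hwd
    omega

theorem eq_mid {n : ℕ} {w : Fin (2 * n) → Bool} (h : Good w) (hr : rv w = w) : w = mid n := by
  have hp : ∀ i, IsPeak w i → i + 1 = n := by
    intro i hi
    have hi2 := hi
    rw [← hr] at hi2
    obtain ⟨hl, hi'⟩ := isPeak_rv hi2
    by_contra hne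
    refine h.2 _ _ hi hi' (by omega) ?_
    rw [← height_rv h.1 hl, hr]
  have hup : ∀ (m : ℕ) (hm : m < 2 * n), m < n → w ⟨m, hm⟩ = true := by
    intro m
    induction m with
    | zero =>
      intro hm _
      have h1 := h.1.2 1
      by_contra hw
      have : psum w 1 = stepVal (w ⟨0, hm⟩) := by
        unfold psum
        rw [Finset.sum_eq_single (⟨0, hm⟩ : Fin (2 * n))]
        · simp
        · intro b _ hb
          have : (b : ℕ) ≠ 0 := fun h => hb (Fin.ext h)
          rw [if_neg (by omega)]
        · simp
      rw [this] at h1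
      simp [stepVal, hw] at h1
    | succ m ih =>
      intro hm hmn
      by_contra hw
      have := hp m ⟨⟨m, by omega⟩, ⟨m + 1, hm⟩, rfl, rfl, ih _ (by omega), by simpa using hw⟩
      omega
  funext j
  have hj := j.isLt
  by_cases hjn : (j : ℕ) < n
  · rw [hup j hj hjn]; simp [mid, hjn]
  · rw [← hr]
    have : w (Fin.rev j) = true := hup (Fin.rev j : Fin (2 * n)) (Fin.rev j).isLt (by rw [Fin.val_rev]; omega)
    simp only [rv, mid, hjn, decide_false, this, Bool.not_true]

/-- For every integer `n ≥ 0`, the number of Dyck paths of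
semi-length `n` in which no two peaks have the same height is odd. -/
theorem stmt_10 (n : ℕ) :
    Odd (Nat.card {w : Fin (2 * n) → Bool // IsDyck w ∧
      ∀ i j : ℕ, IsPeak w i → IsPeak w j → i ≠ j →
        peakHeight w i ≠ peakHeight w j}) := by
  classical
  change Odd (Nat.card {w : Fin (2 * n) → Bool // Good w})
  let f : {w : Fin (2 * n) → Bool // Good w} → {w : Fin (2 * n) → Bool // Good w} :=
    fun w => ⟨rv w.1, good_rv w.2⟩
  have hf : f.Involutive := fun w => Subtype.ext (rv_rv w.1)
  rw [Nat.card_eq_fintype_card, Nat.odd_iff]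
  have h := Equiv.Perm.card_fixedPoints_modEq (p := 2) (n := 1) (f := f) (by
    funext w; exact hf w)
  have h1 : Fintype.card f.fixedPoints = 1 := by
    rw [Fintype.card_eq_one_iff]
    refine ⟨⟨⟨mid n, good_mid n⟩, Subtype.ext (rv_mid n)⟩, ?_⟩
    rintro ⟨⟨w, hw⟩, hfix⟩
    have hw' : w = mid n := eq_mid hw (congrArg Subtype.val hfix)
    subst hw'
    rfl
  rw [h1] at h
  exact h
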